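/- arXiv:2302.01385 — 6 statements merged into one kernel-verified Lean document; each statement's English description precedes it below -/
import Mathlib

section
/- Let X be a measurable space, let μ₁ and μ₀ be probability measures on X, let α, β ∈ [0,1] be real numbers, and define the noisy measures ν₁ = (1-α)•μ₁ + α•μ₀ and ν₀ = β•μ₁ + (1-β)•μ₀. Then for every measurable set S ⊆ X, the noisy demographic-parity gap equals the proportionally scaled true gap: (ν₁ S).toReal - (ν₀ S).toReal = (1 - α - β) · ((μ₁ S).toReal - (μ₀ S).toReal). -/
open MeasureTheory

/-- Proposition 1 (demographic parity part): under the mutually contaminated noise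
model, the noisy demographic-parity gap equals `(1 - α - β)` times the true gap. -/
theorem noisy_dp_gap_eq_scaled_true_gap
    {X : Type*} [MeasurableSpace X]
    (μ₁ μ₀ : Measure X) [IsProbabilityMeasure μ₁] [IsProbabilityMeasure μ₀]
    (α β : ℝ) (hα : α ∈ Set.Icc (0 : ℝ) 1) (hβ : β ∈ Set.Icc (0 : ℝ) 1)
    (ν₁ ν₀ : Measure X)
    (hν₁ : ν₁ = ENNReal.ofReal (1 - α) • μ₁ + ENNReal.ofReal α • μ₀)
    (hν₀ : ν₀ = ENNReal.ofReal β • μ₁ + ENNReal.ofReal (1 - β) • μ₀)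
    (S : Set X) (hS : MeasurableSet S) :
    (ν₁ S).toReal - (ν₀ S).toReal
      = (1 - α - β) * ((μ₁ S).toReal - (μ₀ S).toReal) := by
  -- Evaluating a mixture at `S` in `ℝ` needs nonnegative weights and finite measures.
  have mix : ∀ a b : ℝ, 0 ≤ a → 0 ≤ b →
      ((ENNReal.ofReal a • μ₁ + ENNReal.ofReal b • μ₀) S).toReal
        = a * (μ₁ S).toReal + b * (μ₀ S).toReal := by
    intro a b ha hb
    rw [Measure.add_apply, Measure.smul_apply, Measure.smul_apply, smul_eq_mul, smul_eq_mul,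
      ENNReal.toReal_add (ENNReal.mul_ne_top ENNReal.ofReal_ne_top (measure_ne_top _ _))
        (ENNReal.mul_ne_top ENNReal.ofReal_ne_top (measure_ne_top _ _)),
      ENNReal.toReal_mul, ENNReal.toReal_mul, ENNReal.toReal_ofReal ha, ENNReal.toReal_ofReal hb]
  rw [hν₁, hν₀, mix _ _ (sub_nonneg.2 hα.2) hα.1, mix _ _ hβ.1 (sub_nonneg.2 hβ.2)]
  ring
end

section
/- Let X be a measurable space and for each target label y ∈ {0,1} let μ₁ʸ and μ₀ʸ be probability measures on X (the class-conditional distributions of inputs given A=1, Y=y and A=0, Y=y, respectively). Let αᵧ, βᵧ ∈ [0,1] be label-dependent noise parameters, and define ν₁ʸ = (1-αᵧ)•μ₁ʸ + αᵧ•μ₀ʸ and ν₀ʸ = βᵧ•μ₁ʸ + (1-βᵧ)•μ₀ʸ. Then for every measurable set S ⊆ X, the noisy equal-opportunity (true-positive-rate) gap satisfies (ν₁¹ S).toReal - (ν₀¹ S).toReal = (1 - α₁ - β₁) · ((μ₁¹ S).toReal - (μ₀¹ S).toReal), and likewise for y = 0 the true-negative-rate gap satisfies (ν₁⁰ S).toReal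 - (ν₀⁰ S).toReal = (1 - α₀ - β₀) · ((μ₁⁰ S).toReal - (μ₀⁰ S).toReal). -/
open MeasureTheory

theorem toReal_mix_apply {X : Type*} [MeasurableSpace X] (μ ν : Measure X)
    [IsFiniteMeasure μ] [IsFiniteMeasure ν] {a b : ℝ} (ha : 0 ≤ a) (hb : 0 ≤ b) (S : Set X) :
    ((ENNReal.ofReal a • μ + ENNReal.ofReal b • ν) S).toReal
      = a * (μ S).toReal + b * (ν S).toReal := by
  rw [Measure.add_apply, Measure.smul_apply, Measure.smul_apply, smul_eq_mul, smul_eq_mul,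
    ENNReal.toReal_add (ENNReal.mul_ne_top ENNReal.ofReal_ne_top (measure_ne_top μ S))
      (ENNReal.mul_ne_top ENNReal.ofReal_ne_top (measure_ne_top ν S)),
    ENNReal.toReal_mul, ENNReal.toReal_mul, ENNReal.toReal_ofReal ha, ENNReal.toReal_ofReal hb]

/-- Proposition 1 (equal-opportunity part): under the label-dependent mutually
contaminated noise model, for each target label `y ∈ {0,1}` the noisy rate gap
(TPR gap for `y = 1`, TNR gap for `y = 0`) equals `(1 - αᵧ - βᵧ)` times the
corresponding true gap. -/
theorem noisy_eo_gap_eq_scaled_true_gap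
    {X : Type*} [MeasurableSpace X]
    (μ₁ μ₀ : Fin 2 → Measure X)
    [∀ y, IsProbabilityMeasure (μ₁ y)] [∀ y, IsProbabilityMeasure (μ₀ y)]
    (α β : Fin 2 → ℝ)
    (hα : ∀ y, α y ∈ Set.Icc (0 : ℝ) 1) (hβ : ∀ y, β y ∈ Set.Icc (0 : ℝ) 1)
    (ν₁ ν₀ : Fin 2 → Measure X)
    (hν₁ : ∀ y, ν₁ y = ENNReal.ofReal (1 - α y) • μ₁ y + ENNReal.ofReal (α y) • μ₀ y)
    (hν₀ : ∀ y, ν₀ y = ENNReal.ofReal (β y) • μ₁ y + ENNReal.ofReal (1 - β y) • μ₀ y)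
    (S : Set X) (hS : MeasurableSet S) :
    ((ν₁ 1 S).toReal - (ν₀ 1 S).toReal
        = (1 - α 1 - β 1) * ((μ₁ 1 S).toReal - (μ₀ 1 S).toReal))
    ∧ ((ν₁ 0 S).toReal - (ν₀ 0 S).toReal
        = (1 - α 0 - β 0) * ((μ₁ 0 S).toReal - (μ₀ 0 S).toReal)) := by
  have key : ∀ y, (ν₁ y S).toReal - (ν₀ y S).toReal
      = (1 - α y - β y) * ((μ₁ y S).toReal - (μ₀ y S).toReal) := by
    intro y
    rw [hν₁, hν₀, toReal_mix_apply _ _ (sub_nonneg.2 (hα y).2) (hα y).1,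
      toReal_mix_apply _ _ (hβ y).1 (sub_nonneg.2 (hβ y).2)]
    ring
  exact ⟨key 1, key 0⟩
end

section
/- Let X be a measurable space, let μ₁ and μ₀ be probability measures on X, let α, β ∈ [0,1] with α + β < 1, and define ν₁ = (1-α)•μ₁ + α•μ₀ and ν₀ = β•μ₁ + (1-β)•μ₀. Then for every measurable set S ⊆ X: the noisy gap (ν₁ S).toReal - (ν₀ S).toReal is zero if and only if the true gap (μ₁ S).toReal - (μ₀ S).toReal is zero, it is positive if and only if the true gap is positive, and it is negative if and only if the true gap is negative. -/
/-! Evaluating the mixtures at `S` gives `ν₁ S - ν₀ S = (1 - α - β) (μ₁ S - μ₀ S)`, all terms being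
finite. Since `α + β < 1`, the factor `1 - α - β` is positive, so it preserves the sign. -/

open MeasureTheory

/-- Sign preservation under MC noise with `α + β < 1`: the noisy
demographic-parity gap is zero/positive/negative iff the true gap is. -/
theorem noisy_dp_gap_sign_iff
    {X : Type*} [MeasurableSpace X]
    (μ₁ μ₀ : Measure X) [IsProbabilityMeasure μ₁] [IsProbabilityMeasure μ₀]
    (α β : ℝ) (hα : α ∈ Set.Icc (0 : ℝ) 1) (hβ : β ∈ Set.Icc (0 : ℝ) 1)
    (hαβ : α + β < 1)
    (ν₁ ν₀ : Measure X)
    (hν₁ : ν₁ = ENNReal.ofReal (1 - α) • μ₁ + ENNReal.ofReal α • μ₀)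
    (hν₀ : ν₀ = ENNReal.ofReal β • μ₁ + ENNReal.ofReal (1 - β) • μ₀)
    (S : Set X) (hS : MeasurableSet S) :
    (((ν₁ S).toReal - (ν₀ S).toReal = 0 ↔ (μ₁ S).toReal - (μ₀ S).toReal = 0)
    ∧ (0 < (ν₁ S).toReal - (ν₀ S).toReal ↔ 0 < (μ₁ S).toReal - (μ₀ S).toReal)
    ∧ ((ν₁ S).toReal - (ν₀ S).toReal < 0 ↔ (μ₁ S).toReal - (μ₀ S).toReal < 0)) := by
  obtain ⟨hα0, hα1⟩ := hα
  obtain ⟨hβ0, hβ1⟩ := hβ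
  have mix (a b : ℝ) (ha : 0 ≤ a) (hb : 0 ≤ b) :
      ((ENNReal.ofReal a • μ₁ + ENNReal.ofReal b • μ₀) S).toReal
        = a * (μ₁ S).toReal + b * (μ₀ S).toReal := by
    rw [Measure.add_apply, Measure.smul_apply, Measure.smul_apply, smul_eq_mul, smul_eq_mul,
      ENNReal.toReal_add (ENNReal.mul_ne_top ENNReal.ofReal_ne_top (measure_ne_top _ _))
        (ENNReal.mul_ne_top ENNReal.ofReal_ne_top (measure_ne_top _ _)),
      ENNReal.toReal_mul, ENNReal.toReal_mul, ENNReal.toReal_ofReal ha, ENNReal.toReal_ofReal hb]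
  -- The noisy gap is the true gap scaled by the positive factor `1 - α - β`.
  have gap : (ν₁ S).toReal - (ν₀ S).toReal
      = (1 - α - β) * ((μ₁ S).toReal - (μ₀ S).toReal) := by
    rw [hν₁, hν₀, mix _ _ (by linarith) hα0, mix _ _ hβ0 (by linarith)]
    ring
  have hc : 0 < 1 - α - β := by linarith
  rw [gap]
  exact ⟨by simp [hc.ne'], mul_pos_iff_of_pos_left hc, by simp [mul_neg_iff, hc, hc.not_gt]⟩
end

section
/- Let X be a measurable space, let μ₁ and μ₀ be probability measures on X, let α, β ∈ [0,1] with α + β < 1, and define ν₁ = (1-α)•μ₁ + α•μ₀ and ν₀ = β•μ₁ + (1-β)•μ₀. Then for any two measurable sets S, T ⊆ X (two candidate classifiers), |(ν₁ S).toReal - (ν₀ S).toReal| ≤ |(ν₁ T).toReal - (ν₀ T).toReal| if and only if |(μ₁ S).toReal - (μ₀ S).toReal| ≤ |(μ₁ T).toReal - (μ₀ T).toReal|. Consequently, a classifier minimizes the absolute noisy demographic-parity gap over any family of measurable sets if and only if it minimizes the absolute true demographic-parity gap over that family. -/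
open MeasureTheory

/-- The noisy gap is the true gap scaled by `1 - α - β`, which is positive when `α + β < 1`;
this is why the two gaps order classifiers identically. -/
theorem noisy_dp_gap_eq {X : Type*} [MeasurableSpace X]
    (μ₁ μ₀ : Measure X) [IsProbabilityMeasure μ₁] [IsProbabilityMeasure μ₀]
    {α β : ℝ} (hα : α ∈ Set.Icc (0 : ℝ) 1) (hβ : β ∈ Set.Icc (0 : ℝ) 1) (S : Set X) :
    ((ENNReal.ofReal (1 - α) • μ₁ + ENNReal.ofReal α • μ₀) S).toReal
      - ((ENNReal.ofReal β • μ₁ + ENNReal.ofReal (1 - β) • μ₀) S).toReal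
      = (1 - α - β) * ((μ₁ S).toReal - (μ₀ S).toReal) := by
  have mix : ∀ a b : ℝ, 0 ≤ a → 0 ≤ b →
      ((ENNReal.ofReal a • μ₁ + ENNReal.ofReal b • μ₀) S).toReal
        = a * (μ₁ S).toReal + b * (μ₀ S).toReal := by
    intro a b ha hb
    rw [Measure.add_apply, Measure.smul_apply, Measure.smul_apply, smul_eq_mul, smul_eq_mul,
      ENNReal.toReal_add (ENNReal.mul_ne_top ENNReal.ofReal_ne_top (measure_ne_top μ₁ S))
        (ENNReal.mul_ne_top ENNReal.ofReal_ne_top (measure_ne_top μ₀ S)),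
      ENNReal.toReal_mul, ENNReal.toReal_mul, ENNReal.toReal_ofReal ha, ENNReal.toReal_ofReal hb]
  rw [mix _ _ (sub_nonneg.2 hα.2) hα.1, mix _ _ hβ.1 (sub_nonneg.2 hβ.2)]
  ring

/-- Under MC noise with `α + β < 1`, comparison of absolute demographic-parity
gaps between two classifiers is the same under noisy and true sensitive
attributes; consequently a classifier minimizes the absolute noisy DP gap over
any family of measurable sets iff it minimizes the absolute true DP gap. -/
theorem noisy_dp_gap_abs_le_iff
    {X : Type*} [MeasurableSpace X]
    (μ₁ μ₀ : Measure X) [IsProbabilityMeasure μ₁] [IsProbabilityMeasure μ₀]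
    (α β : ℝ) (hα : α ∈ Set.Icc (0 : ℝ) 1) (hβ : β ∈ Set.Icc (0 : ℝ) 1)
    (hαβ : α + β < 1)
    (ν₁ ν₀ : Measure X)
    (hν₁ : ν₁ = ENNReal.ofReal (1 - α) • μ₁ + ENNReal.ofReal α • μ₀)
    (hν₀ : ν₀ = ENNReal.ofReal β • μ₁ + ENNReal.ofReal (1 - β) • μ₀) :
    (∀ S T : Set X, MeasurableSet S → MeasurableSet T →
      (|(ν₁ S).toReal - (ν₀ S).toReal| ≤ |(ν₁ T).toReal - (ν₀ T).toReal| ↔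
       |(μ₁ S).toReal - (μ₀ S).toReal| ≤ |(μ₁ T).toReal - (μ₀ T).toReal|))
    ∧ (∀ F : Set (Set X), (∀ T ∈ F, MeasurableSet T) → ∀ S ∈ F,
        ((∀ T ∈ F, |(ν₁ S).toReal - (ν₀ S).toReal| ≤ |(ν₁ T).toReal - (ν₀ T).toReal|) ↔
         (∀ T ∈ F, |(μ₁ S).toReal - (μ₀ S).toReal| ≤ |(μ₁ T).toReal - (μ₀ T).toReal|))) := by
  have hc : 0 < 1 - α - β := by linarith
  have key : ∀ S T : Set X,
      (|(ν₁ S).toReal - (ν₀ S).toReal| ≤ |(ν₁ T).toReal - (ν₀ T).toReal| ↔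
       |(μ₁ S).toReal - (μ₀ S).toReal| ≤ |(μ₁ T).toReal - (μ₀ T).toReal|) := by
    intro S T
    rw [hν₁, hν₀, noisy_dp_gap_eq μ₁ μ₀ hα hβ S, noisy_dp_gap_eq μ₁ μ₀ hα hβ T,
      abs_mul, abs_mul, abs_of_pos hc]
    exact mul_le_mul_iff_right₀ hc
  exact ⟨fun S T _ _ => key S T, fun F _ S _ => forall₂_congr fun T _ => key S T⟩
end

section
/- Let E be a real Banach space with its Borel σ-algebra (e.g. a separable Banach space or ℝ^d), let μ₁ and μ₀ be probability measures on E for which the identity is Bochner integrable, with means m₁ = ∫ x ∂μ₁ and m₀ = ∫ x ∂μ₀. Let α, β ∈ [0,1] and define ν₁ = (1-α)•μ₁ + α•μ₀ and ν₀ = β•μ₁ + (1-β)•μ₀. Then the Euclidean distance between means (EDM) of the noisy distributions satisfies ‖(∫ x ∂ν₁) - (∫ x ∂ν₀)‖ = |1 - α - β| · ‖m₁ - m₀‖; in particular, if α + β ≤ 1 then ‖(∫ x ∂ν₁) - (∫ x ∂ν₀)‖ = (1 - α - β) · ‖m₁ - m₀‖. -/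
open MeasureTheory

/-- Quantitative content of Lemma 1: under the MC noise model, the distance
between the means of the noisy distributions is `|1 - α - β|` times the
distance between the true means; in particular it is `(1 - α - β)` times that
distance when `α + β ≤ 1`. -/
theorem noisy_edm_eq_scaled_true_edm
    {E : Type*} [NormedAddCommGroup E] [NormedSpace ℝ E] [CompleteSpace E]
    [MeasurableSpace E] [BorelSpace E] [SecondCountableTopology E]
    (μ₁ μ₀ : Measure E) [IsProbabilityMeasure μ₁] [IsProbabilityMeasure μ₀]
    (hμ₁ : Integrable (fun x => x) μ₁) (hμ₀ : Integrable (fun x => x) μ₀)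
    (m₁ m₀ : E) (hm₁ : m₁ = ∫ x, x ∂μ₁) (hm₀ : m₀ = ∫ x, x ∂μ₀)
    (α β : ℝ) (hα : α ∈ Set.Icc (0 : ℝ) 1) (hβ : β ∈ Set.Icc (0 : ℝ) 1)
    (ν₁ ν₀ : Measure E)
    (hν₁ : ν₁ = ENNReal.ofReal (1 - α) • μ₁ + ENNReal.ofReal α • μ₀)
    (hν₀ : ν₀ = ENNReal.ofReal β • μ₁ + ENNReal.ofReal (1 - β) • μ₀) :
    ‖(∫ x, x ∂ν₁) - (∫ x, x ∂ν₀)‖ = |1 - α - β| * ‖m₁ - m₀‖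
    ∧ (α + β ≤ 1 → ‖(∫ x, x ∂ν₁) - (∫ x, x ∂ν₀)‖ = (1 - α - β) * ‖m₁ - m₀‖) := by
  have mean_mix (a b : ℝ) (ha : 0 ≤ a) (hb : 0 ≤ b) :
      ∫ x, x ∂(ENNReal.ofReal a • μ₁ + ENNReal.ofReal b • μ₀) = a • m₁ + b • m₀ := by
    rw [integral_add_measure (hμ₁.smul_measure ENNReal.ofReal_ne_top)
      (hμ₀.smul_measure ENNReal.ofReal_ne_top), integral_smul_measure, integral_smul_measure,
      ENNReal.toReal_ofReal ha, ENNReal.toReal_ofReal hb, hm₁, hm₀]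
  have key : ‖(∫ x, x ∂ν₁) - (∫ x, x ∂ν₀)‖ = |1 - α - β| * ‖m₁ - m₀‖ := by
    rw [hν₁, hν₀, mean_mix _ _ (sub_nonneg.2 hα.2) hα.1, mean_mix _ _ hβ.1 (sub_nonneg.2 hβ.2),
      ← Real.norm_eq_abs, ← norm_smul]
    congr 1
    module
  refine ⟨key, fun h => ?_⟩
  rw [key, abs_of_nonneg (by linarith)]
end

section
/- Let E be a real Banach space with its Borel σ-algebra (e.g. a separable Banach space or ℝ^d), let μ₁ and μ₀ be probability measures on E for which the identity is Bochner integrable, with means m₁ = ∫ x ∂μ₁ and m₀ = ∫ x ∂μ₀, and assume m₁ ≠ m₀. For noise parameters α, β ∈ [0,1] write ν₁(α) = (1-α)•μ₁ + α•μ₀ and ν₀(β) = β•μ₁ + (1-β)•μ₀, and write EDM(α,β) = ‖(∫ x ∂ν₁(α)) - (∫ x ∂ν₀(β))‖. Then for any two noise-parameter pairs (α,β) and (α',β') with α + β ≤ 1 and α' + β' ≤ 1, one has EDM(α,β) ≥ EDM(α',β') if and only if 1 - α - β ≥ 1 - α' - β'. Consequently, over any family of noise-parameter pairs with α + β ≤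 1, maximizing EDM is equivalent to maximizing the proportionality constant 1 - α - β. -/
/-! The mean of a nonnegative combination `a • μ + b • ν` is the same combination of the means, so
the difference of the noisy means is `(1 - α - β) • (m₁ - m₀)`. For `α + β ≤ 1` the EDM is therefore
`(1 - α - β) * ‖m₁ - m₀‖`, and the factor `‖m₁ - m₀‖` is positive. -/

open MeasureTheory

theorem integral_id_mixture {E : Type*} [NormedAddCommGroup E] [NormedSpace ℝ E]
    [MeasurableSpace E] {μ ν : Measure E}
    (hμ : Integrable (fun x => x) μ) (hν : Integrable (fun x => x) ν)
    {a b : ℝ} (ha : 0 ≤ a) (hb : 0 ≤ b) :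
    ∫ x, x ∂(ENNReal.ofReal a • μ + ENNReal.ofReal b • ν)
      = a • ∫ x, x ∂μ + b • ∫ x, x ∂ν := by
  rw [integral_add_measure (hμ.smul_measure ENNReal.ofReal_ne_top)
    (hν.smul_measure ENNReal.ofReal_ne_top), integral_smul_measure, integral_smul_measure,
    ENNReal.toReal_ofReal ha, ENNReal.toReal_ofReal hb]

/-- Lemma 1 of the paper: if the true means differ, then for noise parameters
with `α + β ≤ 1` the EDM between the noisy distributions is monotone in the
proportionality constant `1 - α - β`; consequently, over any family of
admissible noise-parameter pairs, maximizing the EDM is equivalent to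
maximizing `1 - α - β`. -/
theorem edm_max_iff_prop_const_max
    {E : Type*} [NormedAddCommGroup E] [NormedSpace ℝ E] [CompleteSpace E]
    [MeasurableSpace E] [BorelSpace E] [SecondCountableTopology E]
    (μ₁ μ₀ : Measure E) [IsProbabilityMeasure μ₁] [IsProbabilityMeasure μ₀]
    (hμ₁ : Integrable (fun x => x) μ₁) (hμ₀ : Integrable (fun x => x) μ₀)
    (m₁ m₀ : E) (hm₁ : m₁ = ∫ x, x ∂μ₁) (hm₀ : m₀ = ∫ x, x ∂μ₀)
    (hne : m₁ ≠ m₀)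
    (EDM : ℝ → ℝ → ℝ)
    (hEDM : ∀ α β : ℝ, EDM α β =
      ‖(∫ x, x ∂(ENNReal.ofReal (1 - α) • μ₁ + ENNReal.ofReal α • μ₀))
        - (∫ x, x ∂(ENNReal.ofReal β • μ₁ + ENNReal.ofReal (1 - β) • μ₀))‖) :
    (∀ α β α' β' : ℝ,
      α ∈ Set.Icc (0 : ℝ) 1 → β ∈ Set.Icc (0 : ℝ) 1 →
      α' ∈ Set.Icc (0 : ℝ) 1 → β' ∈ Set.Icc (0 : ℝ) 1 →
      α + β ≤ 1 → α' + β' ≤ 1 →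
      (EDM α' β' ≤ EDM α β ↔ 1 - α' - β' ≤ 1 - α - β))
    ∧ (∀ P : Set (ℝ × ℝ),
        (∀ p ∈ P, p.1 ∈ Set.Icc (0 : ℝ) 1 ∧ p.2 ∈ Set.Icc (0 : ℝ) 1 ∧ p.1 + p.2 ≤ 1) →
        ∀ p ∈ P,
          ((∀ q ∈ P, EDM q.1 q.2 ≤ EDM p.1 p.2) ↔
           (∀ q ∈ P, 1 - q.1 - q.2 ≤ 1 - p.1 - p.2))) := by
  have hpos : 0 < ‖m₁ - m₀‖ := norm_pos_iff.2 (sub_ne_zero.2 hne)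
  have key : ∀ α β : ℝ, α ∈ Set.Icc (0 : ℝ) 1 → β ∈ Set.Icc (0 : ℝ) 1 → α + β ≤ 1 →
      EDM α β = (1 - α - β) * ‖m₁ - m₀‖ := by
    intro α β hα hβ h
    rw [hEDM, integral_id_mixture hμ₁ hμ₀ (sub_nonneg.2 hα.2) hα.1,
      integral_id_mixture hμ₁ hμ₀ hβ.1 (sub_nonneg.2 hβ.2), ← hm₁, ← hm₀]
    have hmean : ((1 - α) • m₁ + α • m₀) - (β • m₁ + (1 - β) • m₀)
        = (1 - α - β) • (m₁ - m₀) := by module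
    rw [hmean, norm_smul, Real.norm_of_nonneg (by linarith)]
  have pairwise : ∀ α β α' β' : ℝ,
      α ∈ Set.Icc (0 : ℝ) 1 → β ∈ Set.Icc (0 : ℝ) 1 →
      α' ∈ Set.Icc (0 : ℝ) 1 → β' ∈ Set.Icc (0 : ℝ) 1 →
      α + β ≤ 1 → α' + β' ≤ 1 →
      (EDM α' β' ≤ EDM α β ↔ 1 - α' - β' ≤ 1 - α - β) := by
    intro α β α' β' hα hβ hα' hβ' h h'
    rw [key α β hα hβ h, key α' β' hα' hβ' h', mul_le_mul_iff_left₀ hpos]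
  refine ⟨pairwise, fun P hP p hp => forall₂_congr fun q hq => ?_⟩
  obtain ⟨hp₁, hp₂, hp₃⟩ := hP p hp
  obtain ⟨hq₁, hq₂, hq₃⟩ := hP q hq
  exact pairwise _ _ _ _ hp₁ hp₂ hq₁ hq₂ hp₃ hq₃
end
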